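/- Let Φ ⊆ ℝ^N be convex, let W ∈ ℝ^{M×M} be symmetric positive definite, let L ∈ ℝ^{M×N}, and set Q = LᵀWL. Suppose C > 0 is such that ‖z₁ − z₂‖₂² ≤ C · (z₁ − z₂)ᵀQ(z₁ − z₂) for all z₁, z₂ ∈ Φ. Given y₁, y₂ ∈ ℝ^M, for i = 1, 2 let ẑ_i ∈ Φ be a minimizer over Φ of z ↦ (Lz − y_i)ᵀW(Lz − y_i). Then ‖ẑ₁ − ẑ₂‖₂ ≤ ‖LᵀW‖₂ · C · ‖y₁ − y₂‖₂. (Proposition 3.8: stability of the nonlinear PBDW background with respect to perturbations of the data, with C = Λ_ξ^nl(Φ).) -/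

import Mathlib

open Matrix

/-- The spectral norm (largest singular value) of a real matrix, i.e. its
operator norm as a map between Euclidean spaces. -/
noncomputable def sMax {m n : ℕ} (B : Matrix (Fin m) (Fin n) ℝ) : ℝ :=
  sSup {r : ℝ | ∃ x : Fin n → ℝ, x ≠ 0
    ∧ r = Real.sqrt (B.mulVec x ⬝ᵥ B.mulVec x) / Real.sqrt (x ⬝ᵥ x)}

theorem aux_cs {n : ℕ} (x y : Fin n → ℝ) : (x ⬝ᵥ y) ^ 2 ≤ (x ⬝ᵥ x) * (y ⬝ᵥ y) := by
  have h := Finset.sum_mul_sq_le_sq_mul_sq Finset.univ x y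
  simpa [dotProduct, pow_two] using h

theorem aux_nn {n : ℕ} (x : Fin n → ℝ) : 0 ≤ x ⬝ᵥ x :=
  Finset.sum_nonneg fun i _ => mul_self_nonneg (x i)

theorem aux_smax {m n : ℕ} (B : Matrix (Fin m) (Fin n) ℝ) (x : Fin n → ℝ) :
    Real.sqrt (B.mulVec x ⬝ᵥ B.mulVec x) ≤ sMax B * Real.sqrt (x ⬝ᵥ x) := by
  by_cases hx : x = 0
  · simp [hx]
  have hb : BddAbove {r : ℝ | ∃ x : Fin n → ℝ, x ≠ 0
    ∧ r = Real.sqrt (B.mulVec x ⬝ᵥ B.mulVec x) / Real.sqrt (x ⬝ᵥ x)} := by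
    refine ⟨Real.sqrt (∑ i, B i ⬝ᵥ B i), ?_⟩
    rintro r ⟨x, hx, rfl⟩
    apply div_le_of_le_mul₀ (Real.sqrt_nonneg _) (Real.sqrt_nonneg _)
    rw [← Real.sqrt_mul (Finset.sum_nonneg fun i _ => aux_nn (B i))]
    apply Real.sqrt_le_sqrt
    rw [Finset.sum_mul]
    refine Finset.sum_le_sum fun i _ => ?_
    have := aux_cs (B i) x
    rw [← pow_two]
    exact this
  have hp : 0 < x ⬝ᵥ x := lt_of_le_of_ne (aux_nn x) fun h => hx (dotProduct_self_eq_zero.1 h.symm)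
  rw [← div_le_iff₀ (Real.sqrt_pos.2 hp)]
  exact le_csSup hb ⟨x, hx, rfl⟩

theorem aux_first {M N : ℕ} (Φ : Set (Fin N → ℝ)) (hΦ : Convex ℝ Φ)
    (W : Matrix (Fin M) (Fin M) ℝ) (hW : Wᵀ = W) (L : Matrix (Fin M) (Fin N) ℝ)
    (y : Fin M → ℝ) (a b : Fin N → ℝ) (ha : a ∈ Φ) (hb : b ∈ Φ)
    (hopt : ∀ z ∈ Φ, (L.mulVec a - y) ⬝ᵥ W.mulVec (L.mulVec a - y)
        ≤ (L.mulVec z - y) ⬝ᵥ W.mulVec (L.mulVec z - y)) :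
    0 ≤ L.mulVec (b - a) ⬝ᵥ W.mulVec (L.mulVec a - y) := by
  set r := L.mulVec a - y with hr
  set v := L.mulVec (b - a) with hv
  have key : ∀ t : ℝ, 0 < t → t ≤ 1 → 0 ≤ 2 * (v ⬝ᵥ W.mulVec r) + t * (v ⬝ᵥ W.mulVec v) := by
    intro t h0 h1
    have hz : a + t • (b - a) ∈ Φ := hΦ.add_smul_sub_mem ha hb ⟨h0.le, h1⟩
    have h := hopt _ hz
    have e : L.mulVec (a + t • (b - a)) - y = r + t • v := by
      rw [mulVec_add, mulVec_smul, hr]; abel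
    have hs : r ⬝ᵥ W.mulVec v = v ⬝ᵥ W.mulVec r := by
      rw [dotProduct_mulVec, ← mulVec_transpose, hW, dotProduct_comm]
    rw [e] at h
    simp only [mulVec_add, mulVec_smul, add_dotProduct, dotProduct_add, smul_dotProduct,
      dotProduct_smul, smul_eq_mul, hs] at h
    have : 0 ≤ t * (2 * (v ⬝ᵥ W.mulVec r) + t * (v ⬝ᵥ W.mulVec v)) := by nlinarith
    exact nonneg_of_mul_nonneg_right this h0
  by_contra hneg
  push Not at hneg
  generalize v ⬝ᵥ W.mulVec r = p at *
  generalize v ⬝ᵥ W.mulVec v = q at *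
  have hd : 0 < |q| - p := by have := abs_nonneg q; linarith
  have h := key (-p / (|q| - p)) (div_pos (by linarith) hd)
    ((div_le_one hd).2 (by have := abs_nonneg q; linarith))
  have h2 : -p / (|q| - p) * q ≤ -p := by
    rw [div_mul_eq_mul_div, div_le_iff₀ hd]
    have := le_abs_self q
    nlinarith
  linarith

/-- **Proposition 3.8: stability of the nonlinear PBDW background.**
Let Φ ⊆ ℝ^N be convex, W symmetric positive definite, Q = LᵀWL, and C > 0
with ‖z₁ − z₂‖₂² ≤ C (z₁ − z₂)ᵀQ(z₁ − z₂) on Φ.  If ẑ_i minimizes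
(Lz − y_i)ᵀW(Lz − y_i) over Φ (i = 1, 2), then
‖ẑ₁ − ẑ₂‖₂ ≤ ‖LᵀW‖₂ · C · ‖y₁ − y₂‖₂. -/
theorem nonlinear_pbdw_stability
    {M N : ℕ} (Φ : Set (Fin N → ℝ)) (hΦconv : Convex ℝ Φ)
    (W : Matrix (Fin M) (Fin M) ℝ) (hW : W.PosDef)
    (L : Matrix (Fin M) (Fin N) ℝ)
    (C : ℝ) (hC : 0 < C)
    (hCbound : ∀ z₁ ∈ Φ, ∀ z₂ ∈ Φ,
      (z₁ - z₂) ⬝ᵥ (z₁ - z₂)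
        ≤ C * ((z₁ - z₂) ⬝ᵥ (Lᵀ * W * L).mulVec (z₁ - z₂)))
    (y₁ y₂ : Fin M → ℝ) (zhat₁ zhat₂ : Fin N → ℝ)
    (hmem₁ : zhat₁ ∈ Φ) (hmem₂ : zhat₂ ∈ Φ)
    (hopt₁ : ∀ z ∈ Φ,
      (L.mulVec zhat₁ - y₁) ⬝ᵥ W.mulVec (L.mulVec zhat₁ - y₁)
        ≤ (L.mulVec z - y₁) ⬝ᵥ W.mulVec (L.mulVec z - y₁))
    (hopt₂ : ∀ z ∈ Φ,
      (L.mulVec zhat₂ - y₂) ⬝ᵥ W.mulVec (L.mulVec zhat₂ - y₂)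
        ≤ (L.mulVec z - y₂) ⬝ᵥ W.mulVec (L.mulVec z - y₂)) :
    Real.sqrt ((zhat₁ - zhat₂) ⬝ᵥ (zhat₁ - zhat₂))
      ≤ sMax (Lᵀ * W) * C * Real.sqrt ((y₁ - y₂) ⬝ᵥ (y₁ - y₂)) := by
  have hWs : Wᵀ = W := by
    have := hW.isHermitian.eq
    rwa [conjTranspose_eq_transpose_of_trivial] at this
  have f1 := aux_first Φ hΦconv W hWs L y₁ zhat₁ zhat₂ hmem₁ hmem₂ hopt₁
  have f2 := aux_first Φ hΦconv W hWs L y₂ zhat₂ zhat₁ hmem₂ hmem₁ hopt₂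
  have hb := hCbound _ hmem₁ _ hmem₂
  have hs := aux_smax (Lᵀ * W) (y₁ - y₂)
  set d := zhat₁ - zhat₂ with hd
  set e := y₁ - y₂ with he
  have e1 : d ⬝ᵥ (Lᵀ * W * L).mulVec d = L.mulVec d ⬝ᵥ W.mulVec (L.mulVec d) := by
    rw [← mulVec_mulVec, ← mulVec_mulVec, dotProduct_mulVec, vecMul_transpose]
  have e2 : d ⬝ᵥ (Lᵀ * W).mulVec e = L.mulVec d ⬝ᵥ W.mulVec e := by
    rw [← mulVec_mulVec, dotProduct_mulVec, vecMul_transpose]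
  have hq : d ⬝ᵥ (Lᵀ * W * L).mulVec d ≤ d ⬝ᵥ (Lᵀ * W).mulVec e := by
    rw [e1, e2]
    have h3 : zhat₂ - zhat₁ = -d := by rw [hd]; abel
    rw [h3] at f1
    simp only [hd, he, mulVec_sub, mulVec_neg, neg_dotProduct, sub_dotProduct,
      dotProduct_sub] at f1 f2 ⊢
    linarith
  have hcs : d ⬝ᵥ (Lᵀ * W).mulVec e ≤ Real.sqrt (d ⬝ᵥ d) *
      Real.sqrt ((Lᵀ * W).mulVec e ⬝ᵥ (Lᵀ * W).mulVec e) := by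
    rw [← Real.sqrt_mul (aux_nn d)]
    exact Real.le_sqrt_of_sq_le (aux_cs _ _)
  have hn := Real.sqrt_nonneg (d ⬝ᵥ d)
  have hsq := Real.mul_self_sqrt (aux_nn d)
  have hfin : Real.sqrt (d ⬝ᵥ d) * Real.sqrt (d ⬝ᵥ d) ≤
      Real.sqrt (d ⬝ᵥ d) * (sMax (Lᵀ * W) * C * Real.sqrt (e ⬝ᵥ e)) := by
    rw [hsq]
    calc d ⬝ᵥ d ≤ C * (d ⬝ᵥ (Lᵀ * W * L).mulVec d) := hb
      _ ≤ C * (Real.sqrt (d ⬝ᵥ d) * (sMax (Lᵀ * W) * Real.sqrt (e ⬝ᵥ e))) := by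
        apply mul_le_mul_of_nonneg_left _ hC.le
        exact (hq.trans hcs).trans (mul_le_mul_of_nonneg_left hs hn)
      _ = _ := by ring
  rcases hn.eq_or_lt with h0 | h0
  · rw [← h0]
    have := (Real.sqrt_nonneg _).trans hs
    have := mul_nonneg this hC.le
    linarith
  · exact le_of_mul_le_mul_left hfin h0
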